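/- (Proposition 1) A hybrid formula φ is valid (⊨ φ) if and only if the disjunctive state consisting of the single game state P : φ is winning, i.e., there is a regulation function ρ such that I have a winning strategy for DG(P : φ, ρ). -/

import Mathlib

/-- Hybrid logic formulas over nominals `ℕ` and propositional variables `ℕ`
(the two sorts are kept disjoint by the constructors). -/
inductive Form : Type where
  | prop : ℕ → Form
  | nom : ℕ → Form
  | rel : ℕ → ℕ → Form
  | and : Form → Form → Form
  | or : Form → Form → Form
  | imp : Form → Form → Form
  | neg : Form → Form
  | at_ : ℕ → Form → Form
  | box : Form → Form
  | dia : Form → Form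

/-- A model for hybrid logic: a nonempty set of worlds, an accessibility
relation, a valuation and an assignment of nominals to worlds. -/
structure Model where
  W : Type
  ne : Nonempty W
  R : W → W → Prop
  V : ℕ → W → Prop
  g : ℕ → W

/-- Satisfaction of a formula at a world of a model. -/
def sat (M : Model) : M.W → Form → Prop
  | w, .prop p => M.V p w
  | w, .nom i => M.g i = w
  | _, .rel i j => M.R (M.g i) (M.g j)
  | w, .and φ ψ => sat M w φ ∧ sat M w ψ
  | w, .or φ ψ => sat M w φ ∨ sat M w ψ
  | w, .imp φ ψ => ¬ sat M w φ ∨ sat M w ψ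
  | w, .neg φ => ¬ sat M w φ
  | _, .at_ i φ => sat M (M.g i) φ
  | w, .box φ => ∀ v, M.R w v → sat M v φ
  | w, .dia φ => ∃ v, M.R w v ∧ sat M v φ

/-- A model is named iff every world has a name, i.e. the assignment is surjective. -/
def Model.Named (M : Model) : Prop := Function.Surjective M.g

/-- A formula is valid iff it is true at every world of every model. -/
def Valid (φ : Form) : Prop := ∀ (M : Model) (w : M.W), sat M w φ

/-- Roles: `pro` means I am the proponent (`P`), `opp` that I am the opponent (`O`). -/
inductive Role : Type where
  | pro : Role
  | opp : Role

/-- Role switch. -/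
def Role.swap : Role → Role
  | .pro => .opp
  | .opp => .pro

/-- Game states of the semantic game over a named model, with worlds referred to
by their names: `loc r i φ` is `Q, i : φ` and `glob r φ` is `Q : φ`. -/
inductive NState : Type where
  | loc : Role → ℕ → Form → NState
  | glob : Role → Form → NState

/-- Elementary formulas: `p`, `i`, `R(i,j)`. -/
def Form.elem : Form → Prop
  | .prop _ => True
  | .nom _ => True
  | .rel _ _ => True
  | _ => False

/-- Elementary game states: states `Q, i : φ` with `φ` elementary (these are the
leaves of the semantic game over named models). -/
def NState.elem : NState → Prop
  | .loc _ _ φ => φ.elem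
  | .glob _ _ => False

/-- States labelled "I" (where it is My choice); all other non-leaf states are labelled "Y". -/
def NState.myTurn : NState → Prop
  | .loc .pro _ (.or _ _) => True
  | .loc .pro _ (.imp _ _) => True
  | .loc .pro _ (.neg _) => True
  | .loc .pro _ (.at_ _ _) => True
  | .loc .pro _ (.dia _) => True
  | .loc .opp _ (.and _ _) => True
  | .loc .opp _ (.box _) => True
  | .glob .opp _ => True
  | _ => False

/-- The (model-independent) child relation of the semantic game over named models,
using the reformulated rules `(R_□)`, `(R_◇)` and `(R_U)`:
`NChild s t` says that `t` is a child of `s` in the game tree. -/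
inductive NChild : NState → NState → Prop where
  | orL (r i φ ψ) : NChild (.loc r i (.or φ ψ)) (.loc r i φ)
  | orR (r i φ ψ) : NChild (.loc r i (.or φ ψ)) (.loc r i ψ)
  | andL (r i φ ψ) : NChild (.loc r i (.and φ ψ)) (.loc r i φ)
  | andR (r i φ ψ) : NChild (.loc r i (.and φ ψ)) (.loc r i ψ)
  | impL (r i φ ψ) : NChild (.loc r i (.imp φ ψ)) (.loc r.swap i φ)
  | impR (r i φ ψ) : NChild (.loc r i (.imp φ ψ)) (.loc r i ψ)
  | neg (r i φ) : NChild (.loc r i (.neg φ)) (.loc r.swap i φ)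
  | at_ (r i j φ) : NChild (.loc r i (.at_ j φ)) (.loc r j φ)
  | box (r i φ) (j : ℕ) : NChild (.loc r i (.box φ)) (.loc r j (.or (.neg (.rel i j)) φ))
  | dia (r i φ) (j : ℕ) : NChild (.loc r i (.dia φ)) (.loc r j (.and (.rel i j) φ))
  | glob (r φ) (i : ℕ) : NChild (.glob r φ) (.loc r i φ)

/-- The label of an elementary leaf state in the game over the model `M`:
"I" iff the corresponding elementary claim is correct. -/
def elemIWin (M : Model) : NState → Prop
  | .loc .pro i φ => sat M (M.g i) φ
  | .loc .opp i φ => ¬ sat M (M.g i) φ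
  | .glob _ _ => False

/-- I have a winning strategy for the semantic game `G(M, s)` over a named model:
at "I"-nodes I keep one child, at "Y"-nodes all children, and all leaves are labelled "I". -/
inductive IWinsN (M : Model) : NState → Prop where
  | leaf {s} : s.elem → elemIWin M s → IWinsN M s
  | move {s t} : s.myTurn → NChild s t → IWinsN M t → IWinsN M s
  | resp {s} : ¬ s.myTurn → ¬ s.elem → (∀ t, NChild s t → IWinsN M t) → IWinsN M s

/-- You have a winning strategy for the semantic game `G(M, s)` over a named model:
at "Y"-nodes You keep one child, at "I"-nodes all children, and all leaves are labelled "Y". -/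
inductive YWinsN (M : Model) : NState → Prop where
  | leaf {s} : s.elem → ¬ elemIWin M s → YWinsN M s
  | move {s t} : ¬ s.myTurn → NChild s t → YWinsN M t → YWinsN M s
  | resp {s} : s.myTurn → (∀ t, NChild s t → YWinsN M t) → YWinsN M s

/-- A disjunctive state: a finite multiset of game states. -/
abbrev DState : Type := Multiset NState

/-- A disjunctive state is elementary iff all its game states are. -/
def DElem (D : DState) : Prop := ∀ s ∈ D, s.elem

/-- A regulation function maps every non-elementary disjunctive state to one of
its non-elementary game states. -/
def IsRegulation (ρ : DState → NState) : Prop :=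
  ∀ D : DState, ¬ DElem D → ρ D ∈ D ∧ ¬ (ρ D).elem

/-- `D` is game valid: for every named model `M` there is a member of `D` for
which I have a winning strategy in the semantic game over `M`. -/
def GameValid (D : DState) : Prop :=
  ∀ M : Model, M.Named → ∃ s ∈ D, IWinsN M s

/-- I have a winning strategy for the disjunctive game `DG(D, ρ)`.
At the state `g ⋁ D` with `ρ (g ⋁ D) = g`: if `g` is labelled "I", I either move in `g`
or duplicate `g`; if `g` is labelled "Y", You move in `g` and I must win after every move.
An elementary disjunctive state is a leaf labelled "I" (winning for Me) iff for every named
model some member of it is a leaf labelled "I" of the semantic game over that model.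
Since winning strategies are wellfounded trees, infinite plays are not winning for Me. -/
inductive DWins (ρ : DState → NState) : DState → Prop where
  | leaf {D : DState} : DElem D → (∀ M : Model, M.Named → ∃ s ∈ D, IWinsN M s) →
      DWins ρ D
  | movI {D : DState} {g g' : NState} : ρ (g ::ₘ D) = g → g.myTurn → NChild g g' →
      DWins ρ (g' ::ₘ D) → DWins ρ (g ::ₘ D)
  | dup {D : DState} {g : NState} : ρ (g ::ₘ D) = g → g.myTurn →
      DWins ρ (g ::ₘ g ::ₘ D) → DWins ρ (g ::ₘ D)
  | movY {D : DState} {g : NState} : ρ (g ::ₘ D) = g → ¬ g.myTurn → ¬ g.elem →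
      (∀ g', NChild g g' → DWins ρ (g' ::ₘ D)) → DWins ρ (g ::ₘ D)

/-- `D` is winning: there is a regulation `ρ` such that I have a winning strategy
for `DG(D, ρ)`. -/
def Winning (D : DState) : Prop :=
  ∃ ρ : DState → NState, IsRegulation ρ ∧ DWins ρ D

/-- `Form.occurs k φ`: the nominal `k` occurs in the formula `φ`. -/
def Form.occurs (k : ℕ) : Form → Prop
  | .prop _ => False
  | .nom i => i = k
  | .rel i j => i = k ∨ j = k
  | .and φ ψ => φ.occurs k ∨ ψ.occurs k
  | .or φ ψ => φ.occurs k ∨ ψ.occurs k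
  | .imp φ ψ => φ.occurs k ∨ ψ.occurs k
  | .neg φ => φ.occurs k
  | .at_ i φ => i = k ∨ φ.occurs k
  | .box φ => φ.occurs k
  | .dia φ => φ.occurs k

/-- A nominal occurs in a game state iff it occurs as its label or in its formula. -/
def NState.occurs (k : ℕ) : NState → Prop
  | .loc _ i φ => i = k ∨ φ.occurs k
  | .glob _ φ => φ.occurs k

/-- A nominal occurs in a disjunctive state iff it occurs in one of its game states. -/
def DOccurs (k : ℕ) (D : DState) : Prop := ∃ s ∈ D, s.occurs k

namespace HG

/-! ### Countability of syntax -/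

def fcode : Form → ℕ
  | .prop p => Nat.pair 0 p
  | .nom i => Nat.pair 1 i
  | .rel i j => Nat.pair 2 (Nat.pair i j)
  | .and φ ψ => Nat.pair 3 (Nat.pair (fcode φ) (fcode ψ))
  | .or φ ψ => Nat.pair 4 (Nat.pair (fcode φ) (fcode ψ))
  | .imp φ ψ => Nat.pair 5 (Nat.pair (fcode φ) (fcode ψ))
  | .neg φ => Nat.pair 6 (fcode φ)
  | .at_ i φ => Nat.pair 7 (Nat.pair i (fcode φ))
  | .box φ => Nat.pair 8 (fcode φ)
  | .dia φ => Nat.pair 9 (fcode φ)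

theorem fcode_inj : ∀ φ ψ : Form, fcode φ = fcode ψ → φ = ψ := by
  intro φ
  induction φ with
  | prop p => intro ψ h; cases ψ <;> simp [fcode, Nat.pair_eq_pair] at h ⊢ <;> assumption
  | nom p => intro ψ h; cases ψ <;> simp [fcode, Nat.pair_eq_pair] at h ⊢ <;> assumption
  | rel p q => intro ψ h; cases ψ <;> simp [fcode, Nat.pair_eq_pair] at h ⊢ <;> assumption
  | and a b iha ihb =>
    intro ψ h
    cases ψ <;> simp [fcode, Nat.pair_eq_pair] at h ⊢
    exact ⟨iha _ h.1, ihb _ h.2⟩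
  | or a b iha ihb =>
    intro ψ h
    cases ψ <;> simp [fcode, Nat.pair_eq_pair] at h ⊢
    exact ⟨iha _ h.1, ihb _ h.2⟩
  | imp a b iha ihb =>
    intro ψ h
    cases ψ <;> simp [fcode, Nat.pair_eq_pair] at h ⊢
    exact ⟨iha _ h.1, ihb _ h.2⟩
  | neg a iha =>
    intro ψ h
    cases ψ <;> simp [fcode, Nat.pair_eq_pair] at h ⊢
    exact iha _ h
  | at_ i a iha =>
    intro ψ h
    cases ψ <;> simp [fcode, Nat.pair_eq_pair] at h ⊢
    exact ⟨h.1, iha _ h.2⟩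
  | box a iha =>
    intro ψ h
    cases ψ <;> simp [fcode, Nat.pair_eq_pair] at h ⊢
    exact iha _ h
  | dia a iha =>
    intro ψ h
    cases ψ <;> simp [fcode, Nat.pair_eq_pair] at h ⊢
    exact iha _ h

instance formCountable : Countable Form :=
  Function.Injective.countable (f := fcode) (fun a b h => fcode_inj a b h)

def scode : NState → Bool × ℕ × Form ⊕ Bool × Form
  | .loc .pro i φ => .inl (true, i, φ)
  | .loc .opp i φ => .inl (false, i, φ)
  | .glob .pro φ => .inr (true, φ)
  | .glob .opp φ => .inr (false, φ)

instance stateCountable : Countable NState := by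
  refine Function.Injective.countable (f := scode) ?_
  rintro (⟨_ | _, i, φ⟩ | ⟨_ | _, φ⟩) (⟨_ | _, j, ψ⟩ | ⟨_ | _, ψ⟩) h <;> simp_all [scode]

instance : Inhabited NState := ⟨.loc .pro 0 (.prop 0)⟩

/-! ### Child relation -/

@[simp] theorem ch_or (r i φ ψ t) :
    NChild (.loc r i (.or φ ψ)) t ↔ t = .loc r i φ ∨ t = .loc r i ψ :=
  ⟨fun h => by cases h <;> simp, by rintro (rfl | rfl) <;> constructor⟩
@[simp] theorem ch_and (r i φ ψ t) :
    NChild (.loc r i (.and φ ψ)) t ↔ t = .loc r i φ ∨ t = .loc r i ψ :=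
  ⟨fun h => by cases h <;> simp, by rintro (rfl | rfl) <;> constructor⟩
@[simp] theorem ch_imp (r i φ ψ t) :
    NChild (.loc r i (.imp φ ψ)) t ↔ t = .loc r.swap i φ ∨ t = .loc r i ψ :=
  ⟨fun h => by cases h <;> simp, by rintro (rfl | rfl) <;> constructor⟩
@[simp] theorem ch_neg (r i φ t) :
    NChild (.loc r i (.neg φ)) t ↔ t = .loc r.swap i φ :=
  ⟨fun h => by cases h; simp, by rintro rfl; constructor⟩
@[simp] theorem ch_at (r i j φ t) :
    NChild (.loc r i (.at_ j φ)) t ↔ t = .loc r j φ :=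
  ⟨fun h => by cases h; simp, by rintro rfl; constructor⟩
@[simp] theorem ch_box (r i φ t) :
    NChild (.loc r i (.box φ)) t ↔ ∃ j, t = .loc r j (.or (.neg (.rel i j)) φ) :=
  ⟨fun h => by cases h; simp, by rintro ⟨j, rfl⟩; constructor⟩
@[simp] theorem ch_dia (r i φ t) :
    NChild (.loc r i (.dia φ)) t ↔ ∃ j, t = .loc r j (.and (.rel i j) φ) :=
  ⟨fun h => by cases h; simp, by rintro ⟨j, rfl⟩; constructor⟩
@[simp] theorem ch_glob (r φ t) :
    NChild (.glob r φ) t ↔ ∃ j, t = .loc r j φ :=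
  ⟨fun h => by cases h; simp, by rintro ⟨j, rfl⟩; constructor⟩

def fsize : Form → ℕ
  | .prop _ => 1
  | .nom _ => 1
  | .rel _ _ => 1
  | .and φ ψ => fsize φ + fsize ψ + 1
  | .or φ ψ => fsize φ + fsize ψ + 1
  | .imp φ ψ => fsize φ + fsize ψ + 1
  | .neg φ => fsize φ + 1
  | .at_ _ φ => fsize φ + 1
  | .box φ => fsize φ + 5
  | .dia φ => fsize φ + 5

def ssize : NState → ℕ
  | .loc _ _ φ => fsize φ
  | .glob _ φ => fsize φ + 1

theorem ssize_lt {s t : NState} (h : NChild s t) : ssize t < ssize s := by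
  cases h <;> simp [ssize, fsize] <;> omega

theorem my_not_elem {s : NState} (h : s.myTurn) : ¬ s.elem := by
  rcases s with ⟨_ | _, i, φ⟩ | ⟨_ | _, φ⟩ <;> try cases φ
  all_goals simp_all [NState.myTurn, NState.elem, Form.elem]

theorem exists_child {s : NState} (h : ¬ s.elem) : ∃ t, NChild s t := by
  rcases s with ⟨r, i, φ⟩ | ⟨r, φ⟩ <;> try cases φ
  all_goals first
    | exact absurd trivial h
    | simp
  all_goals first
    | exact ⟨_, Or.inl rfl⟩
    | exact ⟨_, 0, rfl⟩

/-! ### Truth of states -/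

def Tr (M : Model) : NState → Prop
  | .loc .pro i φ => sat M (M.g i) φ
  | .loc .opp i φ => ¬ sat M (M.g i) φ
  | .glob .pro φ => ∀ i, sat M (M.g i) φ
  | .glob .opp φ => ∃ i, ¬ sat M (M.g i) φ

theorem tr_elem {M : Model} {s : NState} (h : s.elem) : Tr M s ↔ elemIWin M s := by
  rcases s with ⟨_ | _, i, φ⟩ | ⟨_ | _, φ⟩ <;> simp_all [Tr, elemIWin, NState.elem]

theorem not_my_of_elem {s : NState} (h : s.elem) : ¬ s.myTurn := fun h' => my_not_elem h' h

theorem iw_elem {M : Model} {s : NState} (h : s.elem) : IWinsN M s ↔ Tr M s := by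
  rw [tr_elem h]
  constructor
  · intro h'
    cases h' with
    | leaf _ h2 => exact h2
    | move h1 => exact absurd h1 (not_my_of_elem h)
    | resp _ h1 => exact absurd h h1
  · exact IWinsN.leaf h

theorem tr_my {M : Model} (hM : M.Named) {s : NState} (h : s.myTurn) :
    Tr M s ↔ ∃ t, NChild s t ∧ Tr M t := by
  rcases s with ⟨_ | _, i, φ⟩ | ⟨_ | _, φ⟩ <;> try cases φ
  all_goals simp [NState.myTurn] at h
  all_goals simp [Tr, sat, Role.swap, or_and_right, exists_or, hM.exists, imp_iff_not_or]

theorem tr_your {M : Model} (hM : M.Named) {s : NState} (h : ¬ s.myTurn) (h' : ¬ s.elem) :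
    Tr M s ↔ ∀ t, NChild s t → Tr M t := by
  rcases s with ⟨_ | _, i, φ⟩ | ⟨_ | _, φ⟩ <;> try cases φ
  all_goals simp [NState.myTurn, NState.elem, Form.elem] at h h'
  all_goals simp [Tr, sat, Role.swap, hM.forall, or_imp, forall_and]
  all_goals simp only [imp_iff_not_or]

/-! ### Soundness -/

theorem sound {ρ : DState → NState} {D : DState} (h : DWins ρ D) (M : Model) (hM : M.Named) :
    ∃ s ∈ D, Tr M s := by
  induction h with
  | leaf h1 h2 =>
    obtain ⟨s, hs, h⟩ := h2 M hM
    exact ⟨s, hs, (iw_elem (h1 s hs)).1 h⟩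
  | @movI D g g' h1 h2 h3 _ ih =>
    obtain ⟨s, hs, h⟩ := ih
    rcases Multiset.mem_cons.1 hs with rfl | hs
    · exact ⟨g, by simp, (tr_my hM h2).2 ⟨_, h3, h⟩⟩
    · exact ⟨s, by simp [hs], h⟩
  | dup h1 h2 h3 ih =>
    obtain ⟨s, hs, h⟩ := ih
    exact ⟨s, by simpa using hs, h⟩
  | @movY D g h1 h2 h3 _ ih =>
    by_cases hD : ∃ s ∈ D, Tr M s
    · obtain ⟨s, hs, h⟩ := hD
      exact ⟨s, by simp [hs], h⟩
    · refine ⟨g, by simp, (tr_your hM h2 h3).2 fun t ht => ?_⟩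
      obtain ⟨s, hs, h⟩ := ih t ht
      rcases Multiset.mem_cons.1 hs with rfl | hs
      · exact h
      · exact absurd ⟨s, hs, h⟩ hD

theorem occ_bound (φ : Form) : ∃ K, ∀ k, φ.occurs k → k < K := by
  induction φ with
  | prop p => exact ⟨0, by simp [Form.occurs]⟩
  | nom i => exact ⟨i + 1, by simp [Form.occurs]⟩
  | rel i j => exact ⟨i + j + 1, by simp only [Form.occurs]; omega⟩
  | and a b iha ihb =>
    obtain ⟨K, hK⟩ := iha
    obtain ⟨L, hL⟩ := ihb
    refine ⟨K + L, ?_⟩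
    rintro k (h | h)
    · have := hK k h; omega
    · have := hL k h; omega
  | or a b iha ihb =>
    obtain ⟨K, hK⟩ := iha
    obtain ⟨L, hL⟩ := ihb
    refine ⟨K + L, ?_⟩
    rintro k (h | h)
    · have := hK k h; omega
    · have := hL k h; omega
  | imp a b iha ihb =>
    obtain ⟨K, hK⟩ := iha
    obtain ⟨L, hL⟩ := ihb
    refine ⟨K + L, ?_⟩
    rintro k (h | h)
    · have := hK k h; omega
    · have := hL k h; omega
  | neg a ih => exact ih
  | box a ih => exact ih
  | dia a ih => exact ih
  | at_ i a ih =>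
    obtain ⟨K, hK⟩ := ih
    refine ⟨K + i + 1, ?_⟩
    rintro k (h | h)
    · omega
    · have := hK k h; omega

/-- Downward Löwenheim-Skolem into named models. -/
theorem valid_of_named (φ : Form)
    (H : ∀ M : Model, M.Named → ∀ w : M.W, sat M w φ) : Valid φ := by
  classical
  intro M w
  have hsk : ∀ (v : M.W) (ψ : Form), ∃ u : M.W,
      (∃ x, M.R v x ∧ sat M x ψ) → M.R v u ∧ sat M u ψ := by
    intro v ψ
    by_cases h : ∃ x, M.R v x ∧ sat M x ψ
    · obtain ⟨x, hx⟩ := h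
      exact ⟨x, fun _ => hx⟩
    · exact ⟨v, fun h' => absurd h' h⟩
  choose f hf using hsk
  let base : Option ℕ → M.W := fun o => o.elim w M.g
  let ev : Option ℕ × List Form → M.W := fun p => p.2.foldr (fun ψ v => f v ψ) (base p.1)
  let S : Set M.W := Set.range ev
  have hw : w ∈ S := ⟨(none, []), rfl⟩
  have hg : ∀ i, M.g i ∈ S := fun i => ⟨(some i, []), rfl⟩
  have hS : ∀ v ∈ S, ∀ ψ, f v ψ ∈ S := by
    rintro _ ⟨⟨o, l⟩, rfl⟩ ψ
    exact ⟨(o, ψ :: l), rfl⟩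
  haveI : Countable S := (Set.countable_range ev).to_subtype
  haveI : Nonempty S := ⟨⟨w, hw⟩⟩
  obtain ⟨e, he⟩ := exists_surjective_nat S
  obtain ⟨K, hK⟩ := occ_bound φ
  let N : Model :=
    { W := S
      ne := ⟨⟨w, hw⟩⟩
      R := fun a b => M.R a b
      V := fun p a => M.V p a
      g := fun i => if i < K then ⟨M.g i, hg i⟩ else e (i - K) }
  have hN : N.Named := by
    intro x
    obtain ⟨n, hn⟩ := he x
    refine ⟨K + n, ?_⟩
    simp [N, hn]
  have hgN : ∀ i, i < K → (N.g i) = (⟨M.g i, hg i⟩ : S) := by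
    intro i hi
    simp [N, hi]
  have key : ∀ ψ : Form, (∀ k, ψ.occurs k → k < K) → ∀ v : S, sat N v ψ ↔ sat M v.1 ψ := by
    intro ψ
    induction ψ with
    | prop p => intro _ v; exact Iff.rfl
    | nom i =>
      intro h v
      have := hgN i (h i rfl)
      simp only [sat, this]
      exact Subtype.ext_iff
    | rel i j =>
      intro h v
      have h1 := hgN i (h i (Or.inl rfl))
      have h2 := hgN j (h j (Or.inr rfl))
      simp only [sat, h1, h2]
      exact Iff.rfl
    | and a b iha ihb =>
      intro h v
      simp only [sat]
      rw [iha (fun k hk => h k (Or.inl hk)) v, ihb (fun k hk => h k (Or.inr hk)) v]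
    | or a b iha ihb =>
      intro h v
      simp only [sat]
      rw [iha (fun k hk => h k (Or.inl hk)) v, ihb (fun k hk => h k (Or.inr hk)) v]
    | imp a b iha ihb =>
      intro h v
      simp only [sat]
      rw [iha (fun k hk => h k (Or.inl hk)) v, ihb (fun k hk => h k (Or.inr hk)) v]
    | neg a ih =>
      intro h v
      simp only [sat]
      rw [ih h v]
    | at_ i a ih =>
      intro h v
      have h1 := hgN i (h i (Or.inl rfl))
      simp only [sat, h1]
      exact ih (fun k hk => h k (Or.inr hk)) _
    | box a ih =>
      intro h v
      simp only [sat]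
      constructor
      · intro hs x hx
        by_contra hc
        have h3 := hf v.1 (.neg a) ⟨x, hx, hc⟩
        exact h3.2 ((ih h ⟨_, hS v.1 v.2 (.neg a)⟩).1 (hs ⟨_, hS v.1 v.2 (.neg a)⟩ h3.1))
      · intro hs x hx
        exact (ih h x).2 (hs x.1 hx)
    | dia a ih =>
      intro h v
      simp only [sat]
      constructor
      · rintro ⟨x, hx, hs⟩
        exact ⟨x.1, hx, (ih h x).1 hs⟩
      · intro hs
        have h3 := hf v.1 a hs
        exact ⟨⟨_, hS v.1 v.2 a⟩, h3.1, (ih h ⟨_, hS v.1 v.2 a⟩).2 h3.2⟩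
  exact (key φ hK ⟨w, hw⟩).1 (H N hN ⟨w, hw⟩)

/-! ### Free (ranked) winning -/

inductive FW : Ordinal.{0} → DState → Prop where
  | leaf {a : Ordinal.{0}} {D : DState} : DElem D →
      (∀ M : Model, M.Named → ∃ s ∈ D, IWinsN M s) → FW a D
  | movI {a b : Ordinal.{0}} {D : DState} {g g' : NState} : b < a → g.myTurn → NChild g g' →
      FW b (g' ::ₘ D) → FW a (g ::ₘ D)
  | dup {a b : Ordinal.{0}} {D : DState} {g : NState} : b < a → g.myTurn →
      FW b (g ::ₘ g ::ₘ D) → FW a (g ::ₘ D)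
  | movY {a : Ordinal.{0}} {f : NState → Ordinal.{0}} {D : DState} {g : NState} :
      (∀ x, f x < a) → ¬ g.myTurn → ¬ g.elem →
      (∀ g', NChild g g' → FW (f g') (g' ::ₘ D)) → FW a (g ::ₘ D)

def F (D : DState) : Prop := ∃ a, FW a D

theorem F.movI {D : DState} {g g' : NState} (h : g.myTurn) (hc : NChild g g')
    (hF : F (g' ::ₘ D)) : F (g ::ₘ D) := by
  obtain ⟨a, ha⟩ := hF
  exact ⟨_, FW.movI (Order.lt_succ a) h hc ha⟩

theorem F.dup {D : DState} {g : NState} (h : g.myTurn)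
    (hF : F (g ::ₘ g ::ₘ D)) : F (g ::ₘ D) := by
  obtain ⟨a, ha⟩ := hF
  exact ⟨_, FW.dup (Order.lt_succ a) h ha⟩

theorem F.movY {D : DState} {g : NState} (h : ¬ g.myTurn) (h' : ¬ g.elem)
    (hF : ∀ g', NChild g g' → F (g' ::ₘ D)) : F (g ::ₘ D) := by
  have : ∀ g', ∃ a, NChild g g' → FW a (g' ::ₘ D) := by
    intro g'
    by_cases hc : NChild g g'
    · obtain ⟨a, ha⟩ := hF g' hc
      exact ⟨a, fun _ => ha⟩
    · exact ⟨0, fun h => absurd h hc⟩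
  choose f hf using this
  refine ⟨⨆ x, Order.succ (f x), FW.movY (f := f) (fun x => ?_) h h' hf⟩
  exact lt_of_lt_of_le (Order.lt_succ _) (Ordinal.le_iSup (fun x => Order.succ (f x)) x)

def Good (a : Ordinal.{0}) (D : DState) (g : NState) : Prop :=
  ∃ E, D = g ::ₘ E ∧ ¬ g.elem ∧
    ((g.myTurn ∧ ((∃ g', NChild g g' ∧ ∃ b < a, FW b (g' ::ₘ E)) ∨
        ∃ b < a, FW b (g ::ₘ g ::ₘ E))) ∨
     (¬ g.myTurn ∧ ∀ g', NChild g g' → ∃ b < a, FW b (g' ::ₘ E)))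

theorem exists_good {a : Ordinal.{0}} {D : DState} (h : FW a D) (hD : ¬ DElem D) :
    ∃ g, Good a D g := by
  cases h with
  | leaf h1 => exact absurd h1 hD
  | movI h1 h2 h3 h4 =>
    exact ⟨_, _, rfl, my_not_elem h2, Or.inl ⟨h2, Or.inl ⟨_, h3, _, h1, h4⟩⟩⟩
  | dup h1 h2 h3 => exact ⟨_, _, rfl, my_not_elem h2, Or.inl ⟨h2, Or.inr ⟨_, h1, h3⟩⟩⟩
  | movY h1 h2 h3 h4 => exact ⟨_, _, rfl, h3, Or.inr ⟨h2, fun g' hg => ⟨_, h1 g', h4 g' hg⟩⟩⟩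

theorem fw_elem {a : Ordinal.{0}} {D : DState} (h : FW a D) (hD : DElem D) :
    ∀ M : Model, M.Named → ∃ s ∈ D, IWinsN M s := by
  cases h with
  | leaf _ h => exact h
  | movI h1 h2 => exact absurd (hD _ (Multiset.mem_cons_self _ _)) (my_not_elem h2)
  | dup h1 h2 => exact absurd (hD _ (Multiset.mem_cons_self _ _)) (my_not_elem h2)
  | movY _ _ h3 => exact absurd (hD _ (Multiset.mem_cons_self _ _)) h3

theorem winning_of_F {D : DState} (h : F D) : Winning D := by
  classical
  have hρ : ∀ D : DState, ∃ g : NState, (¬ DElem D → g ∈ D ∧ ¬ g.elem) ∧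
      (¬ DElem D → ∀ a, FW a D → ∃ b ≤ a, Good b D g) := by
    intro D
    by_cases hD : DElem D
    · exact ⟨default, fun h => absurd hD h, fun h => absurd hD h⟩
    by_cases hF : ∃ a, FW a D
    · obtain ⟨m, hm, hmin⟩ := WellFounded.has_min (wellFounded_lt (α := Ordinal.{0})) {a | FW a D} hF
      obtain ⟨g, hg⟩ := exists_good hm hD
      refine ⟨g, fun _ => ?_, fun _ a ha => ⟨m, not_lt.1 (hmin a ha), hg⟩⟩
      obtain ⟨E, rfl, h2, _⟩ := hg
      exact ⟨by simp, h2⟩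
    · have : ∃ s ∈ D, ¬ s.elem := by
        unfold DElem at hD
        push Not at hD
        exact hD
      obtain ⟨s, hs, hs'⟩ := this
      exact ⟨s, fun _ => ⟨hs, hs'⟩, fun _ a ha => absurd ⟨a, ha⟩ hF⟩
  choose ρ h1 h2 using hρ
  refine ⟨ρ, h1, ?_⟩
  obtain ⟨a, ha⟩ := h
  induction a using WellFoundedLT.induction generalizing D with
  | ind a ih =>
    by_cases hD : DElem D
    · exact DWins.leaf hD (fw_elem ha hD)
    obtain ⟨c, hc, E, hE, hne, hg⟩ := h2 D hD a ha
    have hr : ρ (ρ D ::ₘ E) = ρ D := by rw [← hE]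
    rw [hE]
    rcases hg with ⟨hm, ⟨g', hg', b, hb, hw⟩ | ⟨b, hb, hw⟩⟩ | ⟨hm, hall⟩
    · exact DWins.movI hr hm hg' (ih b (hb.trans_le hc) hw)
    · exact DWins.dup hr hm (ih b (hb.trans_le hc) hw)
    · refine DWins.movY hr hm hne fun g' hg' => ?_
      obtain ⟨b, hb, hw⟩ := hall g' hg'
      exact ih b (hb.trans_le hc) hw

/-! ### Completeness -/

theorem F_weak_one (N : DState)
    (hN : ∀ E : DState, DElem E → (∀ M : Model, M.Named → ∃ s ∈ E, IWinsN M s) → F (E + N)) :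
    ∀ (n : ℕ) (s : NState), ssize s < n → ∀ E : DState, DElem E →
      (∀ M : Model, M.Named → ∃ s ∈ E, IWinsN M s) → F (s ::ₘ (E + N)) := by
  intro n
  induction n with
  | zero => intro s h; omega
  | succ n ih =>
    intro s hs E hE hv
    by_cases he : s.elem
    · rw [← Multiset.cons_add]
      refine hN _ ?_ ?_
      · intro x hx
        rcases Multiset.mem_cons.1 hx with rfl | hx
        · exact he
        · exact hE x hx
      · intro M hM
        obtain ⟨x, hx, hw⟩ := hv M hM
        exact ⟨x, by simp [hx], hw⟩
    · by_cases hm : s.myTurn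
      · obtain ⟨t, ht⟩ := exists_child he
        exact F.movI hm ht (ih t (by have := ssize_lt ht; omega) E hE hv)
      · exact F.movY hm he fun t ht => ih t (by have := ssize_lt ht; omega) E hE hv

theorem F_weak (N : DState) : ∀ E : DState, DElem E →
    (∀ M : Model, M.Named → ∃ s ∈ E, IWinsN M s) → F (E + N) := by
  induction N using Multiset.induction with
  | empty => intro E hE hv; rw [add_zero]; exact ⟨0, FW.leaf hE hv⟩
  | cons s N ih =>
    intro E hE hv
    rw [Multiset.add_cons]
    exact F_weak_one N ih _ s (Nat.lt_succ_self _) E hE hv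

/-- `M` refutes all elementary members of `D`. -/
def Ref (M : Model) (D : DState) : Prop := M.Named ∧ ∀ s ∈ D, s.elem → ¬ Tr M s

theorem exists_ref {D : DState} (h : ¬ F D) : ∃ M, Ref M D := by
  classical
  by_contra hc
  apply h
  rw [← Multiset.filter_add_not NState.elem D]
  apply F_weak
  · intro s hs
    exact (Multiset.mem_filter.1 hs).2
  · intro M hM
    by_contra hn
    refine hc ⟨M, hM, fun s hs he ht => hn ⟨s, Multiset.mem_filter.2 ⟨hs, he⟩, (iw_elem he).2 ht⟩⟩

theorem step {D : DState} (h : ¬ F D) (s t : NState) : ∃ D' : DState, ¬ F D' ∧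
    (∀ x ∈ D, x ≠ s ∨ x.elem ∨ x.myTurn → x ∈ D') ∧
    (s ∈ D → ¬ s.elem → ¬ s.myTurn → ∃ t, NChild s t ∧ t ∈ D') ∧
    (s ∈ D → s.myTurn → NChild s t → t ∈ D') := by
  by_cases hs : s ∈ D
  swap
  · exact ⟨D, h, fun x hx _ => hx, fun h => absurd h hs, fun h => absurd h hs⟩
  by_cases he : s.elem
  · exact ⟨D, h, fun x hx _ => hx, fun _ h => absurd he h, fun _ h => absurd he (my_not_elem h)⟩
  obtain ⟨E, rfl⟩ := Multiset.exists_cons_of_mem hs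
  by_cases hm : s.myTurn
  · by_cases hc : NChild s t
    · refine ⟨t ::ₘ s ::ₘ E, fun hF => h (F.dup hm (F.movI hm hc hF)), fun x hx _ => by simp_all,
        fun _ _ h => absurd hm h, fun _ _ _ => by simp⟩
    · exact ⟨_, h, fun x hx _ => hx, fun _ _ h => absurd hm h, fun _ _ h => absurd h hc⟩
  · have : ∃ t, NChild s t ∧ ¬ F (t ::ₘ E) := by
      by_contra hc
      push Not at hc
      exact h (F.movY hm he hc)
    obtain ⟨u, hu, hF⟩ := this
    refine ⟨_, hF, ?_, fun _ _ _ => ⟨u, hu, by simp⟩, fun _ h => absurd h hm⟩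
    intro x hx hor
    rcases Multiset.mem_cons.1 hx with rfl | hx
    · rcases hor with h | h | h
      · exact absurd rfl h
      · exact absurd h he
      · exact absurd h hm
    · simp [hx]

theorem counter {D : DState} (h : ¬ F D) : ∃ M : Model, M.Named ∧ ∀ s ∈ D, ¬ Tr M s := by
  classical
  obtain ⟨e0, he0⟩ := exists_surjective_nat (NState × NState)
  let e : ℕ → NState × NState := fun n => e0 (Nat.unpair n).1
  have he : ∀ p N, ∃ n, N ≤ n ∧ e n = p := by
    intro p N
    obtain ⟨k, hk⟩ := he0 p
    exact ⟨Nat.pair k N, Nat.right_le_pair k N, by simp [e, hk]⟩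
  choose nx nx1 nx2 nx3 nx4 using @step
  let Q : ℕ → {D : DState // ¬ F D} := fun n =>
    Nat.rec ⟨D, h⟩ (fun n q => ⟨nx q.2 (e n).1 (e n).2, nx1 q.2 (e n).1 (e n).2⟩) n
  have Q0 : (Q 0).1 = D := rfl
  have Qs : ∀ n, (Q (n + 1)).1 = nx (Q n).2 (e n).1 (e n).2 := fun n => rfl
  -- persistence
  have pers1 : ∀ n m x, n ≤ m → x ∈ (Q n).1 → (x.elem ∨ x.myTurn) → x ∈ (Q m).1 := by
    intro n m x hnm hx hor
    induction m, hnm using Nat.le_induction with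
    | base => exact hx
    | succ m _ ih => rw [Qs]; exact nx2 _ _ _ x ih (Or.inr hor)
  have hmy : ∀ n s t, s ∈ (Q n).1 → s.myTurn → NChild s t → ∃ m, t ∈ (Q m).1 := by
    intro n s t hs hm hc
    obtain ⟨m, hnm, hem⟩ := he (s, t) n
    refine ⟨m + 1, ?_⟩
    have hs' := pers1 n m s hnm hs (Or.inr hm)
    rw [Qs]
    have := nx4 (Q m).2 (e m).1 (e m).2
    rw [hem] at this ⊢
    exact this hs' hm hc
  have hyour : ∀ n s, s ∈ (Q n).1 → ¬ s.myTurn → ¬ s.elem →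
      ∃ t, NChild s t ∧ ∃ m, t ∈ (Q m).1 := by
    intro n s hs hm hne
    by_contra hc
    have pers : ∀ m, n ≤ m → s ∈ (Q m).1 := by
      intro m hnm
      induction m, hnm using Nat.le_induction with
      | base => exact hs
      | succ m _ ih =>
        by_cases hsm : s = (e m).1
        · exfalso
          have := nx3 (Q m).2 (e m).1 (e m).2
          rw [← hsm] at this
          obtain ⟨t, ht, ht'⟩ := this ih hne hm
          refine hc ⟨t, ht, m + 1, ?_⟩
          rw [Qs, ← hsm]
          exact ht'
        · rw [Qs]; exact nx2 _ _ _ s ih (Or.inl hsm)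
    obtain ⟨m, hnm, hem⟩ := he (s, s) n
    have := nx3 (Q m).2 (e m).1 (e m).2
    have hQ := Qs m
    rw [hem] at this hQ
    obtain ⟨t, ht, ht'⟩ := this (pers m hnm) hne hm
    refine hc ⟨t, ht, m + 1, ?_⟩
    rw [hQ]
    exact ht'
  have refmono : ∀ n m M, n ≤ m → Ref M (Q m).1 → Ref M (Q n).1 := by
    intro n m M hnm hM
    exact ⟨hM.1, fun s hs hel => hM.2 s (pers1 n m s hnm hs (Or.inl hel)) hel⟩
  -- the limit model
  let Ev : (Model → Prop) → Prop := fun A => ∃ n, ∀ M, Ref M (Q n).1 → A M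
  have ev2 : ∀ {A B C : Model → Prop}, (∀ M, A M → B M → C M) → Ev A → Ev B → Ev C := by
    rintro A B C hABC ⟨n, hn⟩ ⟨m, hm⟩
    refine ⟨max n m, fun M hM => hABC M ?_ ?_⟩
    · exact hn M (refmono _ _ M (le_max_left _ _) hM)
    · exact hm M (refmono _ _ M (le_max_right _ _) hM)
  have evF : ∀ {A : Model → Prop} n, (∀ M, Ref M (Q n).1 → ¬ A M) → ¬ Ev A := by
    rintro A n hn ⟨m, hm⟩
    obtain ⟨M, hM⟩ := exists_ref (Q (max n m)).2
    exact hn M (refmono _ _ M (le_max_left _ _) hM) (hm M (refmono _ _ M (le_max_right _ _) hM))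
  let st : Setoid ℕ :=
    { r := fun i j => Ev fun M => M.g i = M.g j
      iseqv :=
        { refl := fun i => ⟨0, fun M _ => rfl⟩
          symm := fun {i j} h => ev2 (fun M h _ => h.symm) h h
          trans := fun {i j k} h h' => ev2 (fun M h h' => h.trans h') h h' } }
  let L : Model :=
    { W := Quotient st
      ne := ⟨Quotient.mk st 0⟩
      R := Quotient.lift₂ (fun i j => Ev fun M => M.R (M.g i) (M.g j)) (by
        intro i j i' j' hi hj
        have hi : Ev fun M => M.g i = M.g i' := hi
        have hj : Ev fun M => M.g j = M.g j' := hj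
        have hb : Ev fun M => M.g i = M.g i' ∧ M.g j = M.g j' := ev2 (fun M h h' => ⟨h, h'⟩) hi hj
        apply propext
        constructor
        · intro h; exact ev2 (fun M h h' => by rw [← h.1, ← h.2]; exact h') hb h
        · intro h; exact ev2 (fun M h h' => by rw [h.1, h.2]; exact h') hb h)
      V := fun p => Quotient.lift (fun i => Ev fun M => M.V p (M.g i)) (by
        intro i i' hi
        have hi : Ev fun M => M.g i = M.g i' := hi
        apply propext
        constructor
        · intro h; exact ev2 (fun M h h' => by rw [← h]; exact h') hi h
        · intro h; exact ev2 (fun M h h' => by rw [h]; exact h') hi h)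
      g := fun i => Quotient.mk st i }
  have hL : L.Named := Quotient.mk_surjective
  have satEl : ∀ φ : Form, φ.elem → ∀ i, sat L (L.g i) φ ↔ Ev fun M => sat M (M.g i) φ := by
    intro φ hφ i
    cases φ with
    | prop p => exact Iff.rfl
    | nom j => exact ⟨fun h => Quotient.exact h, fun h => Quotient.sound h⟩
    | rel j k => exact Iff.rfl
    | _ => exact absurd hφ (by simp [Form.elem])
  have main : ∀ k s, ssize s < k → ∀ n, s ∈ (Q n).1 → ¬ Tr L s := by
    intro k
    induction k with
    | zero => intro s hs; omega
    | succ k ih =>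
      intro s hk n hs
      by_cases hel : s.elem
      · rcases s with ⟨_ | _, i, φ⟩ | ⟨r, φ⟩
        · have h1 := satEl φ hel i
          intro htr
          exact evF n (fun M hM => hM.2 _ hs hel) (h1.1 htr)
        · have h1 := satEl φ hel i
          intro htr
          exact htr (h1.2 ⟨n, fun M hM => not_not.1 (hM.2 _ hs hel)⟩)
        · exact absurd hel (by simp [NState.elem])
      by_cases hm : s.myTurn
      · rw [tr_my hL hm]
        rintro ⟨t, ht, htr⟩
        obtain ⟨m, hm'⟩ := hmy n s t hs hm ht
        exact ih t (by have := ssize_lt ht; omega) m hm' htr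
      · rw [tr_your hL hm hel]
        intro hall
        obtain ⟨t, ht, m, hm'⟩ := hyour n s hs hm hel
        exact ih t (by have := ssize_lt ht; omega) m hm' (hall t ht)
  exact ⟨L, hL, fun s hs => main _ s (Nat.lt_succ_self _) 0 hs⟩

end HG

/-- (Proposition 1) `φ` is valid iff the disjunctive state `P : φ` is winning. -/
theorem valid_iff_winning (φ : Form) :
    Valid φ ↔ Winning {NState.glob .pro φ} := by
  constructor
  · intro hv
    apply HG.winning_of_F
    by_contra hF
    obtain ⟨M, _, h⟩ := HG.counter hF
    exact h _ (Multiset.mem_singleton_self _) (fun i => hv M (M.g i))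
  · rintro ⟨ρ, _, hw⟩
    apply HG.valid_of_named
    intro M hM w
    obtain ⟨s, hs, h⟩ := HG.sound hw M hM
    rw [Multiset.mem_singleton] at hs
    subst hs
    obtain ⟨i, rfl⟩ := hM w
    exact h i
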